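/- arXiv:1807.07135 — 3 statements merged into one kernel-verified Lean document; each statement's English description precedes it below -/
import Mathlib

section
/- Let K be a field, let V be a finite-dimensional K-vector space of dimension d, and let V = W₀ ⊇ W₁ ⊇ ⋯ ⊇ W_N = {0} be a decreasing chain of linear subspaces with W₀ = V and W_N = {0}. For every basis s₁, …, s_d of V, one has Σ_{i=1}^{d} ord(s_i) ≤ Σ_{b=1}^{N−1} dim_K W_b. -/
/-!
Count the pairs `(i, b)` with `1 ≤ b < N` and `s i ∈ W b` in two ways. As the chain decreases, a
vector lying in `W m` lies in each of `W 1, …, W m`, so it contributes at least `m` pairs. A given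
`b` contributes at most `dim W b` pairs, because the `s i` lying in `W b` are linearly independent
there.
-/

open Finset Module

section NatPredicate

variable {P : ℕ → Prop} {N : ℕ}

theorem le_card_filter_Ico_one_of_antitone [DecidablePred P] (hP : Antitone P) {m : ℕ}
    (hmN : m < N) (hm : P m) : m ≤ #{b ∈ Ico 1 N | P b} := by
  have Ico_subset : Ico 1 (m + 1) ⊆ {b ∈ Ico 1 N | P b} := fun b hb => by
    obtain ⟨one_le, lt_succ⟩ := mem_Ico.mp hb
    have le_m : b ≤ m := Nat.le_of_lt_succ lt_succ
    exact mem_filter.mpr ⟨mem_Ico.mpr ⟨one_le, le_m.trans_lt hmN⟩, hP le_m hm⟩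
  simpa using card_le_card Ico_subset

theorem sSup_setOf_lt_and_mem (h0 : P 0) (hN : ¬P N) :
    sSup {b | b < N ∧ P b} ∈ {b | b < N ∧ P b} := by
  have N_pos : 0 < N := Nat.pos_of_ne_zero fun h => hN (h ▸ h0)
  exact Nat.sSup_mem ⟨0, N_pos, h0⟩ ⟨N, fun _ hb => hb.1.le⟩

end NatPredicate

section LinearIndependent

variable {R M ι : Type*} [Semiring R] [StrongRankCondition R] [AddCommMonoid M] [Module R M]
  [Fintype ι] {s : ι → M}

theorem card_filter_mem_le_finrank (hs : LinearIndependent R s) (p : Submodule R M)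
    [Module.Finite R p] [DecidablePred (s · ∈ p)] : #{i | s i ∈ p} ≤ finrank R p := by
  have indep : LinearIndependent R fun i : {i // s i ∈ p} => (⟨s i, i.2⟩ : p) :=
    .of_comp p.subtype (hs.comp _ Subtype.val_injective)
  simpa only [Fintype.card_subtype] using indep.fintype_card_le_finrank

theorem basis_sum_ord_le_general (hs : LinearIndependent R s) {N : ℕ} {W : ℕ → Submodule R M}
    (hW : Antitone W) (hfin : ∀ b ∈ Ico 1 N, Module.Finite R (W b))
    {m : ι → ℕ} (hm : ∀ i, m i < N ∧ s i ∈ W (m i)) :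
    ∑ i, m i ≤ ∑ b ∈ Ico 1 N, finrank R (W b) := by
  classical
  calc
    ∑ i, m i ≤ ∑ i, #{b ∈ Ico 1 N | s i ∈ W b} := sum_le_sum fun i _ =>
      le_card_filter_Ico_one_of_antitone (fun _ _ hbc hc => hW hbc hc) (hm i).1 (hm i).2
    _ = ∑ b ∈ Ico 1 N, #{i | s i ∈ W b} :=
      sum_card_bipartiteAbove_eq_sum_card_bipartiteBelow fun i b => s i ∈ W b
    _ ≤ ∑ b ∈ Ico 1 N, finrank R (W b) := sum_le_sum fun b hb =>
      have := hfin b hb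
      card_filter_mem_le_finrank hs (W b)

end LinearIndependent

/-- Let `K` be a field, `V` a finite-dimensional `K`-vector space of
dimension `d`, and `V = W 0 ⊇ W 1 ⊇ ⋯ ⊇ W N = {0}` a decreasing chain of subspaces.
For a nonzero vector `v`, its order is `ord v = max {b ∈ {0,…,N-1} : v ∈ W b}`
(formalized via `sSup`). For every basis `s 1, …, s d` of `V` one has
`∑ i ord (s i) ≤ ∑_{b=1}^{N-1} dim W b`. -/
theorem basis_sum_ord_le {K V : Type*} [Field K] [AddCommGroup V] [Module K V]
    [FiniteDimensional K V] (d N : ℕ)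
    (W : ℕ → Submodule K V) (hW : Antitone W)
    (h0 : W 0 = ⊤) (hN : W N = ⊥)
    (s : Module.Basis (Fin d) K V) :
    ∑ i : Fin d, sSup {b : ℕ | b < N ∧ s i ∈ W b} ≤
      ∑ b ∈ Finset.Ico 1 N, Module.finrank K (W b) := by
  refine basis_sum_ord_le_general s.linearIndependent hW (fun _ _ => inferInstance) fun i => ?_
  exact sSup_setOf_lt_and_mem (P := (s i ∈ W ·)) (by simp [h0]) (by simp [hN, s.ne_zero i])
end

section
/- Let a, b, m, m′, B be real numbers with 0 < b < m′ ≤ m and a + m − b ≤ 1. If B ≤ (m/(m−b))·(1−a) − b, then B − m ≤ (m′/(m′−b))·(1−(a+m−b)) − b. -/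
section OrderedField

variable {K : Type*} [Field K]

theorem div_mul_sub_self {d : K} (hd : d ≠ 0) (x t : K) : x / d * (t - d) = x / d * t - x := by
  rw [mul_sub, div_mul_cancel₀ x hd]

theorem div_sub_eq_one_add_div_sub {b x : K} (hx : x - b ≠ 0) : x / (x - b) = 1 + b / (x - b) := by
  rw [one_add_div hx, sub_add_cancel]

variable [LinearOrder K] [IsStrictOrderedRing K]

theorem antitoneOn_div_sub {b : K} (hb : 0 ≤ b) :
    AntitoneOn (fun x ↦ x / (x - b)) (Set.Ioi b) := by
  intro x hx y hy hxy
  have hx_pos : 0 < x - b := sub_pos.2 hx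
  have hy_pos : 0 < y - b := sub_pos.2 hy
  calc y / (y - b) = 1 + b / (y - b) := div_sub_eq_one_add_div_sub hy_pos.ne'
    _ ≤ 1 + b / (x - b) := by gcongr
    _ = x / (x - b) := (div_sub_eq_one_add_div_sub hx_pos.ne').symm

theorem inductive_step_inequality_general {a b m m' B : K} (hb : 0 ≤ b) (hbm' : b < m')
    (hm'm : m' ≤ m) (ha : a + m - b ≤ 1) (hB : B ≤ m / (m - b) * (1 - a) - b) :
    B - m ≤ m' / (m' - b) * (1 - (a + m - b)) - b := by
  have hbm : b < m := hbm'.trans_le hm'm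
  have coeff_le : m / (m - b) ≤ m' / (m' - b) := antitoneOn_div_sub hb hbm' hbm hm'm
  calc B - m ≤ m / (m - b) * (1 - a) - b - m := by gcongr
    _ = m / (m - b) * (1 - a - (m - b)) - b := by
      rw [div_mul_sub_self (sub_pos.2 hbm).ne', sub_right_comm]
    _ = m / (m - b) * (1 - (a + m - b)) - b := by rw [sub_sub, add_sub_assoc]
    _ ≤ m' / (m' - b) * (1 - (a + m - b)) - b :=
      sub_le_sub_right (mul_le_mul_of_nonneg_right coeff_le (sub_nonneg.2 ha)) b

end OrderedField

/-- Let `a, b, m, m′, B` be real numbers with `0 < b < m′ ≤ m` and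
`a + m − b ≤ 1`. If `B ≤ (m/(m−b))·(1−a) − b`, then
`B − m ≤ (m′/(m′−b))·(1−(a+m−b)) − b`. -/
theorem inductive_step_inequality (a b m m' B : ℝ) (hb : 0 < b) (hbm' : b < m')
    (hm'm : m' ≤ m) (ha : a + m - b ≤ 1)
    (hB : B ≤ m / (m - b) * (1 - a) - b) :
    B - m ≤ m' / (m' - b) * (1 - (a + m - b)) - b :=
  inductive_step_inequality_general hb.le hbm' hm'm ha hB
end

section
/- Let P, Q ∈ ℂ[x,y] be homogeneous polynomials of degree 2, and set F(s,t,x,y) := s·P(x,y) + t·Q(x,y). Assume that there is no point (s,t,x,y) ∈ ℂ⁴ with (s,t) ≠ (0,0) and (x,y) ≠ (0,0) at which all four partial derivatives ∂F/∂s, ∂F/∂t, ∂F/∂x, ∂F/∂y vanish simultaneously (i.e., the bidegree (1,2) curve {F = 0} ⊂ ℙ¹×ℙ¹ is smooth). Then there exist invertible linear substitutions (s,t) ↦ (αs + βt, γs + δt) with αδ − βγ ≠ 0 and (x,y) ↦ (a·x + b·y, c·x + d·y) with ad − bc ≠ 0 transforming F into the polynomial s·y² − t·x². -/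
open MvPolynomial

/-!
At a common zero `v ≠ 0` of `P` and `Q`, Euler's identity puts `v` in the kernel of the Jacobian
matrix of `(P, Q)`; a covector `(s, t) ≠ 0` annihilating that matrix then gives a singular point
`((s, t), v)` of the curve. So on a smooth curve `P` and `Q` have no common zero.

The discriminant of `s P + t Q` is a quadratic form in `(s, t)`, so it has a nontrivial zero, and
some member of the pencil is a square `ℓ²`. Any second generator `R` of the pencil is nonzero on the
line `ℓ = 0`, so completing the square along that line gives `R = ℓ'² - k ℓ²` with `ℓ'` independent
of `ℓ`. The pencil is therefore spanned by `ℓ²` and `-ℓ'²`, and `ℓ'`, `ℓ` are the new `x`, `y`.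
-/

section Jacobian

theorem exists_sum_mul_pderiv_eq_zero_of_common_zero {σ R : Type*} [Fintype σ] [CommRing R]
    [IsDomain R] {P : σ → MvPolynomial σ R} {n : σ → ℕ} (hP : ∀ i, (P i).IsHomogeneous (n i))
    {v : σ → R} (hv : v ≠ 0) (hzero : ∀ i, eval v (P i) = 0) :
    ∃ c : σ → R, c ≠ 0 ∧ ∀ j, ∑ i, c i * eval v (pderiv j (P i)) = 0 := by
  classical
  let J : Matrix σ σ R := Matrix.of fun i j => eval v (pderiv j (P i))
  have hJv : J.mulVec v = 0 := by
    funext i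
    calc J.mulVec v i = eval v (∑ j, X j * pderiv j (P i)) := by
          simp [J, Matrix.mulVec, dotProduct, mul_comm]
      _ = 0 := by simp [(hP i).sum_X_mul_pderiv, hzero i]
  have hdet : J.det = 0 := Matrix.exists_mulVec_eq_zero_iff.mp ⟨v, hv, hJv⟩
  obtain ⟨c, hc, hcJ⟩ := Matrix.exists_vecMul_eq_zero_iff.mpr hdet
  exact ⟨c, hc, fun j => congrFun hcJ j⟩

variable {K : Type*} [NontriviallyNormedField K]

theorem hasDerivAt_eval {σ : Type*} [Fintype σ] (p : MvPolynomial σ K) {v : K → σ → K}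
    {v' : σ → K} {x : K} (hv : ∀ i, HasDerivAt (v · i) (v' i) x) :
    HasDerivAt (fun u => eval (v u) p) (∑ i, eval (v x) (pderiv i p) * v' i) x := by
  classical
  induction p using MvPolynomial.induction_on with
  | C a => simpa using hasDerivAt_const x a
  | add p q hp hq => simpa [add_mul, Finset.sum_add_distrib] using! hp.add hq
  | mul_X p j hp =>
    simp only [map_mul, eval_X]
    refine (hp.mul (hv j)).congr_deriv ?_
    have hleibniz (i : σ) : eval (v x) (pderiv i (p * X j)) =
        eval (v x) (pderiv i p) * v x j + eval (v x) p * if i = j then 1 else 0 := by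
      obtain rfl | hij := eq_or_ne i j
      · simp [add_comm, mul_comm]
      · simp [hij, hij.symm, mul_comm]
    simp only [hleibniz]
    simp [add_mul, Finset.sum_add_distrib, Finset.sum_mul, mul_right_comm]

theorem deriv_pencil_fst (P Q : MvPolynomial (Fin 2) K) (s t x y : K) :
    deriv (fun u => s * eval ![u, y] P + t * eval ![u, y] Q) x =
      s * eval ![x, y] (pderiv 0 P) + t * eval ![x, y] (pderiv 0 Q) := by
  have hderiv (p : MvPolynomial (Fin 2) K) :
      HasDerivAt (fun u => eval ![u, y] p) (eval ![x, y] (pderiv 0 p)) x := by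
    simpa using hasDerivAt_eval p (v := fun u => ![u, y]) (v' := ![1, 0])
      (by simp [Fin.forall_fin_two, hasDerivAt_id', hasDerivAt_const])
  exact (((hderiv P).const_mul s).add ((hderiv Q).const_mul t)).deriv

theorem deriv_pencil_snd (P Q : MvPolynomial (Fin 2) K) (s t x y : K) :
    deriv (fun u => s * eval ![x, u] P + t * eval ![x, u] Q) y =
      s * eval ![x, y] (pderiv 1 P) + t * eval ![x, y] (pderiv 1 Q) := by
  have hderiv (p : MvPolynomial (Fin 2) K) :
      HasDerivAt (fun u => eval ![x, u] p) (eval ![x, y] (pderiv 1 p)) y := by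
    simpa using hasDerivAt_eval p (v := fun u => ![x, u]) (v' := ![0, 1])
      (by simp [Fin.forall_fin_two, hasDerivAt_id', hasDerivAt_const])
  exact (((hderiv P).const_mul s).add ((hderiv Q).const_mul t)).deriv

theorem exists_singular_point_of_common_zero {P Q : MvPolynomial (Fin 2) K} {m n : ℕ}
    (hP : P.IsHomogeneous m) (hQ : Q.IsHomogeneous n) {F : K → K → K → K → K}
    (hF : ∀ s t x y : K, F s t x y = s * eval ![x, y] P + t * eval ![x, y] Q) {x y : K}
    (hxy : (x, y) ≠ (0, 0)) (hPxy : eval ![x, y] P = 0) (hQxy : eval ![x, y] Q = 0) :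
    ∃ s t : K, (s, t) ≠ (0, 0) ∧
      deriv (fun u => F u t x y) s = 0 ∧
      deriv (fun u => F s u x y) t = 0 ∧
      deriv (fun u => F s t u y) x = 0 ∧
      deriv (fun u => F s t x u) y = 0 := by
  obtain ⟨c, hc, hcJ⟩ := exists_sum_mul_pderiv_eq_zero_of_common_zero
    (P := ![P, Q]) (n := ![m, n]) (v := ![x, y]) (by simp [Fin.forall_fin_two, hP, hQ])
    (by simpa using hxy) (by simp [Fin.forall_fin_two, hPxy, hQxy])
  simp only [Fin.sum_univ_two, Fin.forall_fin_two, Matrix.cons_val_zero, Matrix.cons_val_one] at hcJ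
  refine ⟨c 0, c 1, ?_, ?_, ?_, ?_, ?_⟩
  · contrapose! hc
    simpa [funext_iff, Fin.forall_fin_two] using hc
  · simp [hF, hPxy, hQxy]
  · simp [hF, hPxy, hQxy]
  · simpa only [hF, deriv_pencil_fst] using hcJ.1
  · simpa only [hF, deriv_pencil_snd] using hcJ.2

end Jacobian

section BinaryForm

theorem eval_eq_sum_antidiagonal_of_isHomogeneous {R : Type*} [CommSemiring R]
    {P : MvPolynomial (Fin 2) R} {n : ℕ} (hP : P.IsHomogeneous n) (x y : R) :
    eval ![x, y] P = ∑ ij ∈ Finset.HasAntidiagonal.antidiagonal n,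
      coeff (Finsupp.equivFunOnFinite.symm ![ij.1, ij.2]) P * (x ^ ij.1 * y ^ ij.2) := by
  have hcons (d : Fin 2 →₀ ℕ) : Finsupp.equivFunOnFinite.symm ![d 0, d 1] = d := by
    ext i; fin_cases i <;> rfl
  rw [eval_eq']
  refine Finset.sum_of_injOn (fun d => (d 0, d 1)) ?_ ?_ ?_ ?_
  · intro d _ e _ hde
    rw [← hcons d, ← hcons e, (Prod.mk.inj hde).1, (Prod.mk.inj hde).2]
  · intro d hd
    have hdeg : d.degree = n := by
      by_contra hne
      exact mem_support_iff.mp hd (hP.coeff_eq_zero hne)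
    simpa [Finsupp.degree_eq_sum] using hdeg
  · intro ij _ hij
    rw [notMem_support_iff.mp fun hmem => hij ⟨_, hmem, rfl⟩, zero_mul]
  · intro d _
    simp [hcons, Fin.prod_univ_two]

/-- The value at `(x, y)` of the binary quadratic form with coefficients `a`, `b`, `c`. The middle
coefficient is `b`, not `2b`, so that the discriminant of the form is `discrim a b c`. -/
def binaryQuadratic {R : Type*} [CommSemiring R] (a b c x y : R) : R :=
  a * x ^ 2 + b * (x * y) + c * y ^ 2

theorem exists_eval_eq_binaryQuadratic {R : Type*} [CommSemiring R] {P : MvPolynomial (Fin 2) R}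
    (hP : P.IsHomogeneous 2) :
    ∃ a b c : R, ∀ x y, eval ![x, y] P = binaryQuadratic a b c x y := by
  refine ⟨coeff (Finsupp.equivFunOnFinite.symm ![2, 0]) P,
    coeff (Finsupp.equivFunOnFinite.symm ![1, 1]) P,
    coeff (Finsupp.equivFunOnFinite.symm ![0, 2]) P, fun x y => ?_⟩
  rw [eval_eq_sum_antidiagonal_of_isHomogeneous hP]
  simp [binaryQuadratic, Finset.Nat.antidiagonal_succ, add_comm, add_left_comm]

theorem binaryQuadratic_pencil {R : Type*} [CommSemiring R] (a b c a' b' c' s t x y : R) :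
    s * binaryQuadratic a b c x y + t * binaryQuadratic a' b' c' x y =
      binaryQuadratic (s * a + t * a') (s * b + t * b') (s * c + t * c') x y := by
  simp only [binaryQuadratic]
  ring

theorem discrim_pencil {R : Type*} [CommRing R] (a b c a' b' c' s t : R) :
    discrim (s * a + t * a') (s * b + t * b') (s * c + t * c') =
      binaryQuadratic (discrim a b c) (2 * b * b' - 4 * a * c' - 4 * a' * c)
        (discrim a' b' c') s t := by
  simp only [binaryQuadratic, discrim]
  ring

/-- The Gram determinant identity for the vectors `(u, v)` and `(x, y)`. -/
theorem four_mul_binaryQuadratic_mul_binaryQuadratic {R : Type*} [CommRing R]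
    (a b c u v x y : R) :
    4 * binaryQuadratic a b c u v * binaryQuadratic a b c x y =
      ((2 * a * u + b * v) * x + (b * u + 2 * c * v) * y) ^ 2 -
        discrim a b c * (u * y - v * x) ^ 2 := by
  simp only [binaryQuadratic, discrim]
  ring

end BinaryForm

section LinearSubstitution

theorem exists_mul_sub_mul_ne_zero {R : Type*} [CommRing R] {α γ : R} (h : (α, γ) ≠ (0, 0)) :
    ∃ β δ : R, α * δ - β * γ ≠ 0 := by
  obtain rfl | hα := eq_or_ne α 0
  · exact ⟨1, 0, by simpa using h⟩
  · exact ⟨0, 1, by simpa using hα⟩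

theorem eq_zero_and_eq_zero_of_det_ne_zero {R : Type*} [CommRing R] [NoZeroDivisors R]
    {α β γ δ p q : R} (hdet : α * δ - β * γ ≠ 0) (hα : α * p + γ * q = 0)
    (hβ : β * p + δ * q = 0) : p = 0 ∧ q = 0 := by
  constructor <;> refine (mul_eq_zero.mp ?_).resolve_left hdet
  · linear_combination δ * hα - γ * hβ
  · linear_combination α * hβ - β * hα

theorem exists_inverse_linear_substitution {K : Type*} [Field K] {l m l' m' : K}
    (h : l * m' - m * l' ≠ 0) :
    ∃ a b c d : K, a * d - b * c ≠ 0 ∧ ∀ x y,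
      l * (a * x + b * y) + m * (c * x + d * y) = x ∧
        l' * (a * x + b * y) + m' * (c * x + d * y) = y := by
  set D := l * m' - m * l' with hD
  refine ⟨m' / D, -m / D, -l' / D, l / D, ?_, fun x y => ⟨?_, ?_⟩⟩
  · have hdet : m' / D * (l / D) - -m / D * (-l' / D) = D⁻¹ := by
      field_simp
      linear_combination -hD
    rw [hdet]
    exact inv_ne_zero h
  · field_simp
    linear_combination -x * hD
  · field_simp
    linear_combination -y * hD

end LinearSubstitution

section AlgClosed

variable {K : Type*} [Field K] [IsAlgClosed K]

theorem exists_binaryQuadratic_eq_zero (a b c : K) :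
    ∃ x y : K, (x, y) ≠ (0, 0) ∧ binaryQuadratic a b c x y = 0 := by
  obtain rfl | ha := eq_or_ne a 0
  · exact ⟨1, 0, by simp, by simp [binaryQuadratic]⟩
  · obtain ⟨x, hx⟩ := IsAlgClosed.exists_root
      (Polynomial.C a * Polynomial.X ^ 2 + Polynomial.C b * Polynomial.X + Polynomial.C c)
      (by simp [Polynomial.degree_quadratic ha])
    exact ⟨x, 1, by simp, by simpa [binaryQuadratic] using hx⟩

theorem exists_discrim_pencil_eq_zero (a b c a' b' c' : K) :
    ∃ s t : K, (s, t) ≠ (0, 0) ∧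
      discrim (s * a + t * a') (s * b + t * b') (s * c + t * c') = 0 := by
  simpa only [discrim_pencil] using exists_binaryQuadratic_eq_zero _ _ _

variable [NeZero (2 : K)] {a b c : K}

theorem exists_binaryQuadratic_eq_sq_sub {u v : K} (huv : binaryQuadratic a b c u v ≠ 0) :
    ∃ l m : K, l * u + m * v ≠ 0 ∧ ∀ x y, binaryQuadratic a b c x y =
      (l * x + m * y) ^ 2 -
        discrim a b c / (4 * binaryQuadratic a b c u v) * (u * y - v * x) ^ 2 := by
  obtain ⟨r, hr⟩ := IsAlgClosed.exists_pow_nat_eq (binaryQuadratic a b c u v) two_pos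
  have hr0 : r ≠ 0 := by
    rintro rfl
    exact huv (by simp [← hr])
  have h2 : (2 : K) ≠ 0 := two_ne_zero
  have h4 : (4 : K) ≠ 0 := by
    rw [show (4 : K) = 2 * 2 by norm_num]
    exact mul_ne_zero h2 h2
  refine ⟨(2 * a * u + b * v) / (2 * r), (b * u + 2 * c * v) / (2 * r), ?_, fun x y => ?_⟩
  · have hvalue : (2 * a * u + b * v) / (2 * r) * u + (b * u + 2 * c * v) / (2 * r) * v = r := by
      field_simp
      rw [hr, binaryQuadratic]
      ring
    rwa [hvalue]
  · have hgram := four_mul_binaryQuadratic_mul_binaryQuadratic a b c u v x y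
    rw [← hr] at hgram ⊢
    field_simp
    linear_combination 4 * hgram

theorem exists_binaryQuadratic_eq_sq (hdiscrim : discrim a b c = 0) :
    ∃ l m : K, ∀ x y, binaryQuadratic a b c x y = (l * x + m * y) ^ 2 := by
  by_cases hzero : ∀ x y, binaryQuadratic a b c x y = 0
  · exact ⟨0, 0, by simpa using hzero⟩
  · push Not at hzero
    obtain ⟨u, v, huv⟩ := hzero
    obtain ⟨l, m, -, hsq⟩ := exists_binaryQuadratic_eq_sq_sub huv
    exact ⟨l, m, by simpa [hdiscrim] using hsq⟩

variable {a' b' c' : K}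

theorem exists_pencil_eq_sq_and_eq_neg_sq
    (hcommon : ∀ x y, binaryQuadratic a b c x y = 0 → binaryQuadratic a' b' c' x y = 0 →
      (x, y) = (0, 0)) :
    ∃ α β γ δ l m l' m' : K, α * δ - β * γ ≠ 0 ∧ l' * m - m' * l ≠ 0 ∧ ∀ x y,
      α * binaryQuadratic a b c x y + γ * binaryQuadratic a' b' c' x y = (l * x + m * y) ^ 2 ∧
      β * binaryQuadratic a b c x y + δ * binaryQuadratic a' b' c' x y =
        -(l' * x + m' * y) ^ 2 := by
  obtain ⟨α, γ, hαγ, hdiscrim⟩ := exists_discrim_pencil_eq_zero a b c a' b' c'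
  obtain ⟨β, δ, hdet⟩ := exists_mul_sub_mul_ne_zero hαγ
  obtain ⟨l, m, hsq⟩ := exists_binaryQuadratic_eq_sq hdiscrim
  set R := binaryQuadratic (β * a + δ * a') (β * b + δ * b') (β * c + δ * c')
  have hcommon' (x y : K) (hℓ : l * x + m * y = 0) (hRxy : R x y = 0) : (x, y) = (0, 0) := by
    obtain ⟨hPxy, hQxy⟩ := eq_zero_and_eq_zero_of_det_ne_zero hdet
      (by rw [binaryQuadratic_pencil, hsq, hℓ, zero_pow two_ne_zero])
      ((binaryQuadratic_pencil ..).trans hRxy)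
    exact hcommon x y hPxy hQxy
  have hR_ne : R m (-l) ≠ 0 := by
    intro hRml
    have hml : m = 0 ∧ l = 0 := by simpa using hcommon' m (-l) (by ring) hRml
    obtain ⟨x, y, hxy, hRxy⟩ := exists_binaryQuadratic_eq_zero
      (β * a + δ * a') (β * b + δ * b') (β * c + δ * c')
    exact hxy (hcommon' x y (by simp [hml]) hRxy)
  obtain ⟨l', m', hindep, hR_eq⟩ := exists_binaryQuadratic_eq_sq_sub hR_ne
  set k := discrim (β * a + δ * a') (β * b + δ * b') (β * c + δ * c') / (4 * R m (-l))
  refine ⟨α, -(β + k * α), γ, -(δ + k * γ), l, m, l', m', ?_, ?_, fun x y => ⟨?_, ?_⟩⟩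
  · contrapose! hdet
    linear_combination -hdet
  · simpa [sub_eq_add_neg] using hindep
  · rw [binaryQuadratic_pencil, hsq]
  · have hsq_xy := hsq x y
    have hR_xy := hR_eq x y
    rw [← binaryQuadratic_pencil] at hsq_xy hR_xy
    linear_combination -hR_xy - k * hsq_xy

theorem exists_normal_form_of_no_common_zero
    (hcommon : ∀ x y, binaryQuadratic a b c x y = 0 → binaryQuadratic a' b' c' x y = 0 →
      (x, y) = (0, 0)) :
    ∃ α β γ δ p q r w : K, α * δ - β * γ ≠ 0 ∧ p * w - q * r ≠ 0 ∧ ∀ s t x y,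
      (α * s + β * t) * binaryQuadratic a b c (p * x + q * y) (r * x + w * y) +
        (γ * s + δ * t) * binaryQuadratic a' b' c' (p * x + q * y) (r * x + w * y) =
      s * y ^ 2 - t * x ^ 2 := by
  obtain ⟨α, β, γ, δ, l, m, l', m', hdet, hindep, hpencil⟩ :=
    exists_pencil_eq_sq_and_eq_neg_sq hcommon
  obtain ⟨p, q, r, w, hdet', hinverse⟩ := exists_inverse_linear_substitution hindep
  refine ⟨α, β, γ, δ, p, q, r, w, hdet, hdet', fun s t x y => ?_⟩
  obtain ⟨hsq, hneg_sq⟩ := hpencil (p * x + q * y) (r * x + w * y)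
  obtain ⟨hx, hy⟩ := hinverse x y
  rw [hy] at hsq
  rw [hx] at hneg_sq
  linear_combination s * hsq + t * hneg_sq

end AlgClosed

theorem normal_form_of_smooth_bidegree_one_two_general {K : Type*} [NontriviallyNormedField K]
    [IsAlgClosed K] [NeZero (2 : K)] (P Q : MvPolynomial (Fin 2) K)
    (hP : P.IsHomogeneous 2) (hQ : Q.IsHomogeneous 2)
    (F : K → K → K → K → K)
    (hF : ∀ s t x y : K, F s t x y = s * eval ![x, y] P + t * eval ![x, y] Q)
    (hsmooth : ¬ ∃ s t x y : K, (s, t) ≠ (0, 0) ∧ (x, y) ≠ (0, 0) ∧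
      deriv (fun u => F u t x y) s = 0 ∧
      deriv (fun u => F s u x y) t = 0 ∧
      deriv (fun u => F s t u y) x = 0 ∧
      deriv (fun u => F s t x u) y = 0) :
    ∃ α β γ δ a b c d : K, α * δ - β * γ ≠ 0 ∧ a * d - b * c ≠ 0 ∧
      ∀ s t x y : K,
        F (α * s + β * t) (γ * s + δ * t) (a * x + b * y) (c * x + d * y) =
          s * y ^ 2 - t * x ^ 2 := by
  have hcommon (x y : K) (hPxy : eval ![x, y] P = 0) (hQxy : eval ![x, y] Q = 0) :
      (x, y) = (0, 0) := by
    by_contra hxy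
    obtain ⟨s, t, hst, hderiv⟩ := exists_singular_point_of_common_zero hP hQ hF hxy hPxy hQxy
    exact hsmooth ⟨s, t, x, y, hst, hxy, hderiv⟩
  obtain ⟨a, b, c, hPeval⟩ := exists_eval_eq_binaryQuadratic hP
  obtain ⟨a', b', c', hQeval⟩ := exists_eval_eq_binaryQuadratic hQ
  simp only [hF, hPeval, hQeval] at hcommon ⊢
  exact exists_normal_form_of_no_common_zero hcommon

/-- Let `P, Q ∈ ℂ[x,y]` be homogeneous of degree 2 and set
`F(s,t,x,y) = s·P(x,y) + t·Q(x,y)`. If there is no point `(s,t,x,y)` with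
`(s,t) ≠ (0,0)` and `(x,y) ≠ (0,0)` at which all four partial derivatives of `F`
vanish simultaneously (i.e. the bidegree `(1,2)` curve `{F = 0} ⊂ ℙ¹×ℙ¹` is smooth),
then there are invertible linear substitutions in `(s,t)` and in `(x,y)`
transforming `F` into `s·y² − t·x²`. -/
theorem normal_form_of_smooth_bidegree_one_two (P Q : MvPolynomial (Fin 2) ℂ)
    (hP : P.IsHomogeneous 2) (hQ : Q.IsHomogeneous 2)
    (F : ℂ → ℂ → ℂ → ℂ → ℂ)
    (hF : ∀ s t x y : ℂ, F s t x y = s * eval ![x, y] P + t * eval ![x, y] Q)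
    (hsmooth : ¬ ∃ s t x y : ℂ, (s, t) ≠ (0, 0) ∧ (x, y) ≠ (0, 0) ∧
      deriv (fun u => F u t x y) s = 0 ∧
      deriv (fun u => F s u x y) t = 0 ∧
      deriv (fun u => F s t u y) x = 0 ∧
      deriv (fun u => F s t x u) y = 0) :
    ∃ α β γ δ a b c d : ℂ, α * δ - β * γ ≠ 0 ∧ a * d - b * c ≠ 0 ∧
      ∀ s t x y : ℂ,
        F (α * s + β * t) (γ * s + δ * t) (a * x + b * y) (c * x + d * y) =
          s * y ^ 2 - t * x ^ 2 :=
  normal_form_of_smooth_bidegree_one_two_general P Q hP hQ F hF hsmooth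
end
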